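/- arXiv:1701.01762 — 5 statements merged into one kernel-verified Lean document; each statement's English description precedes it below -/
import Mathlib

section
/- Let H be a group and σ an automorphism of H with σ ∘ σ = id. For γ ∈ H, the set H_γ := {(g₁,g₂) ∈ H^σ × H^σ : g₁⁻¹ · γ · g₂ = γ} is a subgroup of H^σ × H^σ, and the first projection (g₁,g₂) ↦ g₁ defines a group isomorphism from H_γ onto the centralizer {g ∈ H^σ : g · (γ · σ(γ)⁻¹) = (γ · σ(γ)⁻¹) · g} of γ·σ(γ)⁻¹ in H^σ. -/
/-!
For subgroups `K` and `L` of `H`, the relation `a⁻¹ * γ * b = γ` says `b = γ⁻¹ * a * γ`, so the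
first projection identifies the stabilizer of `γ` in `K × L` with `K ⊓ γLγ⁻¹`. When `K = L = H^σ`
and `g` is fixed by `σ`, the element `γ⁻¹ * g * γ` is fixed by `σ` exactly when `g` commutes with
`γ * (σ γ)⁻¹`, so this intersection is the centralizer in `H^σ` of that element.
-/

section TwoSidedStabilizer

open scoped Pointwise

variable {H : Type*} [Group H] (K L : Subgroup H) (γ : H)

/-- The stabilizer of `γ` in `K × L`, for the action of `(a, b)` sending `x` to `a * x * b⁻¹`;
with `K = L = H^σ` it is the group `H_γ`. The stabilizing condition is encoded as
`a = γ * b * γ⁻¹`, an equality of two homomorphisms at `(a, b)`. -/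
def twoSidedStabilizer : Subgroup (H × H) :=
  K.prod L ⊓ (MonoidHom.fst H H).eqLocus ((MulAut.conj γ).toMonoidHom.comp (MonoidHom.snd H H))

variable {K L γ}

theorem mem_twoSidedStabilizer {p : H × H} :
    p ∈ twoSidedStabilizer K L γ ↔ p.1 ∈ K ∧ p.2 ∈ L ∧ p.1⁻¹ * γ * p.2 = γ := by
  have conj_iff : p.1 = γ * p.2 * γ⁻¹ ↔ p.1⁻¹ * γ * p.2 = γ := by
    rw [eq_mul_inv_iff_mul_eq, mul_assoc, inv_mul_eq_iff_eq_mul, eq_comm]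
  rw [← conj_iff, ← and_assoc]
  rfl

theorem mem_conj_smul_iff {g : H} : g ∈ MulAut.conj γ • L ↔ γ⁻¹ * g * γ ∈ L := by
  rw [Subgroup.mem_pointwise_smul_iff_inv_smul_mem, MulAut.smul_def, MulAut.conj_inv_apply]

theorem snd_eq_of_mem_twoSidedStabilizer {p : H × H} (hp : p ∈ twoSidedStabilizer K L γ) :
    p.2 = γ⁻¹ * p.1 * γ := by
  obtain ⟨-, -, h⟩ := mem_twoSidedStabilizer.mp hp
  rw [eq_inv_mul_of_mul_eq h, mul_inv_rev, inv_inv]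

variable (K L γ)

/-- The first projection, as an isomorphism from the stabilizer of `γ` in `K × L` onto
`K ⊓ γLγ⁻¹`. -/
def twoSidedStabilizerEquivInf :
    twoSidedStabilizer K L γ ≃* (K ⊓ MulAut.conj γ • L : Subgroup H) where
  toFun p := ⟨p.1.1, (mem_twoSidedStabilizer.mp p.2).1, mem_conj_smul_iff.mpr <|
    snd_eq_of_mem_twoSidedStabilizer p.2 ▸ (mem_twoSidedStabilizer.mp p.2).2.1⟩
  invFun g := ⟨(g, γ⁻¹ * g * γ), mem_twoSidedStabilizer.mpr
    ⟨g.2.1, mem_conj_smul_iff.mp g.2.2, by group⟩⟩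
  left_inv p := Subtype.ext <| Prod.ext rfl (snd_eq_of_mem_twoSidedStabilizer p.2).symm
  right_inv _ := rfl
  map_mul' _ _ := rfl

end TwoSidedStabilizer

section FixedSubgroup

open scoped Pointwise

variable {H : Type*} [Group H] {σ : H →* H} {g γ : H}

variable (σ) in
/-- The subgroup `H^σ` of fixed points of an endomorphism `σ` of `H`. -/
def fixedSubgroup : Subgroup H :=
  σ.eqLocus (MonoidHom.id H)

theorem mem_fixedSubgroup : g ∈ fixedSubgroup σ ↔ σ g = g :=
  Iff.rfl

theorem conj_mem_fixedSubgroup_iff_commute (hg : g ∈ fixedSubgroup σ) :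
    γ⁻¹ * g * γ ∈ fixedSubgroup σ ↔ Commute g (γ * (σ γ)⁻¹) := by
  rw [mem_fixedSubgroup] at hg
  calc σ (γ⁻¹ * g * γ) = γ⁻¹ * g * γ
    _ ↔ (σ γ)⁻¹ * g * σ γ = γ⁻¹ * g * γ := by simp only [map_mul, map_inv, hg]
    _ ↔ γ * (σ γ)⁻¹ * g = g * γ * (σ γ)⁻¹ := by
      rw [eq_mul_inv_iff_mul_eq, mul_assoc γ⁻¹, eq_inv_mul_iff_mul_eq]
      simp only [mul_assoc]
    _ ↔ Commute g (γ * (σ γ)⁻¹) := by rw [commute_iff_eq, eq_comm, mul_assoc g]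

theorem fixedSubgroup_inf_conj_smul :
    fixedSubgroup σ ⊓ MulAut.conj γ • fixedSubgroup σ =
      fixedSubgroup σ ⊓ Subgroup.centralizer {γ * (σ γ)⁻¹} := by
  ext g
  simp only [Subgroup.mem_inf]
  refine and_congr_right fun hg ↦ ?_
  rw [mem_conj_smul_iff, conj_mem_fixedSubgroup_iff_commute hg,
    Subgroup.mem_centralizer_singleton_iff, commute_iff_eq]

end FixedSubgroup

theorem stmt0_general {H : Type*} [Group H] (σ : H →* H) (γ : H) :
    ∃ (S : Subgroup (H × H)) (C : Subgroup H),
      (∀ p : H × H, p ∈ S ↔ σ p.1 = p.1 ∧ σ p.2 = p.2 ∧ p.1⁻¹ * γ * p.2 = γ) ∧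
      (∀ g : H, g ∈ C ↔ σ g = g ∧ g * (γ * (σ γ)⁻¹) = (γ * (σ γ)⁻¹) * g) ∧
      ∃ e : S ≃* C, ∀ p : S, (e p : H) = (p : H × H).1 := by
  let e := (twoSidedStabilizerEquivInf (fixedSubgroup σ) (fixedSubgroup σ) γ).trans
    (MulEquiv.subgroupCongr fixedSubgroup_inf_conj_smul)
  refine ⟨_, _, fun p ↦ mem_twoSidedStabilizer, fun g ↦ ?_, e, fun p ↦ rfl⟩
  rw [Subgroup.mem_inf, mem_fixedSubgroup, Subgroup.mem_centralizer_singleton_iff]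

/-- For a group `H` with involutive automorphism `σ`, the set
`H_γ = {(g₁,g₂) ∈ H^σ × H^σ : g₁⁻¹ γ g₂ = γ}` is a subgroup of `H × H`, and the
first projection is a group isomorphism onto the centralizer of `γ · σ(γ)⁻¹` in `H^σ`. -/
theorem stmt0 {H : Type*} [Group H] (σ : H ≃* H) (hσ : ∀ h, σ (σ h) = h) (γ : H) :
    ∃ (S : Subgroup (H × H)) (C : Subgroup H),
      (∀ p : H × H, p ∈ S ↔ σ p.1 = p.1 ∧ σ p.2 = p.2 ∧ p.1⁻¹ * γ * p.2 = γ) ∧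
      (∀ g : H, g ∈ C ↔ σ g = g ∧ g * (γ * (σ γ)⁻¹) = (γ * (σ γ)⁻¹) * g) ∧
      ∃ e : S ≃* C, ∀ p : S, (e p : H) = (p : H × H).1 :=
  stmt0_general σ.toMonoidHom γ
end

section
/- Let G be a group with commuting automorphisms σ, τ satisfying σ ∘ σ = id and τ ∘ τ = id, and set θ := σ ∘ τ. For δ ∈ G, the set G_δ := {(g₁,g₂) ∈ G^σ × G^θ : g₁⁻¹ · δ · g₂ = δ} is a subgroup of G^σ × G^θ, and the first projection (g₁,g₂) ↦ g₁ defines a group isomorphism from G_δ onto the τ-twisted centralizer C^τ := {g ∈ G^σ : g⁻¹ · (δ · θ(δ)⁻¹) · τ(g) = δ · θ(δ)⁻¹}. -/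
/-
An element `(a, b)` of `G_δ` is determined by `a`, since `b = δ⁻¹ a δ`; so the first projection
identifies `G_δ` with `G^σ ∩ δ G^θ δ⁻¹`. Conjugation by `δ` carries the centralizer of `x` for
`θ`-twisted conjugation to that of `δ x θ(δ)⁻¹`; for `x = 1` this makes `δ G^θ δ⁻¹` the
`θ`-twisted centralizer of `δ θ(δ)⁻¹`. Finally `θ` and `τ` agree on `G^σ`.
-/

section

open scoped Pointwise

variable {G : Type*} [Group G]

/-- The stabilizer of `δ` in `H × K` acting on `G` by `(a, b) • x = a * x * b⁻¹`, i.e. the pairs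
with `a⁻¹ * δ * b = δ`. It is encoded as a subgroup of `G × G` rather than of `H × K`. -/
def doubleCosetStabilizer (H K : Subgroup G) (δ : G) : Subgroup (G × G) :=
  H.prod K ⊓
    (MonoidHom.fst G G).eqLocus ((MulAut.conj δ).toMonoidHom.comp (MonoidHom.snd G G))

/-- The stabilizer of `x` under `φ`-twisted conjugation `g • x = g * x * (φ g)⁻¹`; for `φ` the
identity it is the centralizer of `x`, and for `x = 1` the subgroup fixed by `φ`. -/
def twistedCentralizer (φ : G →* G) (x : G) : Subgroup G :=
  (MonoidHom.id G).eqLocus ((MulAut.conj x).toMonoidHom.comp φ)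

theorem inv_mul_mul_eq_iff_eq_conj {a b x : G} : a⁻¹ * x * b = x ↔ a = x * b * x⁻¹ := by
  rw [mul_assoc, inv_mul_eq_iff_eq_mul, eq_mul_inv_iff_mul_eq, eq_comm]

theorem mem_doubleCosetStabilizer {H K : Subgroup G} {δ : G} {p : G × G} :
    p ∈ doubleCosetStabilizer H K δ ↔ p.1 ∈ H ∧ p.2 ∈ K ∧ p.1⁻¹ * δ * p.2 = δ := by
  rw [inv_mul_mul_eq_iff_eq_conj, ← and_assoc]
  rfl

theorem mem_twistedCentralizer {φ : G →* G} {x g : G} :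
    g ∈ twistedCentralizer φ x ↔ g⁻¹ * x * φ g = x := by
  rw [inv_mul_mul_eq_iff_eq_conj]
  rfl

theorem mem_twistedCentralizer_one {φ : G →* G} {g : G} :
    g ∈ twistedCentralizer φ 1 ↔ φ g = g := by
  rw [mem_twistedCentralizer, mul_one, inv_mul_eq_one, eq_comm]

theorem conj_smul_twistedCentralizer (φ : G →* G) (δ x : G) :
    MulAut.conj δ • twistedCentralizer φ x = twistedCentralizer φ (δ * x * (φ δ)⁻¹) := by
  ext g
  rw [Subgroup.mem_pointwise_smul_iff_inv_smul_mem, MulAut.smul_def, MulAut.conj_inv_apply,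
    mem_twistedCentralizer, mem_twistedCentralizer]
  calc (δ⁻¹ * g * δ)⁻¹ * x * φ (δ⁻¹ * g * δ) = x
      ↔ δ⁻¹ * (g⁻¹ * (δ * x * (φ δ)⁻¹) * φ g) * φ δ = x := by
        simp only [map_mul, map_inv, mul_inv_rev, inv_inv, mul_assoc]
    _ ↔ g⁻¹ * (δ * x * (φ δ)⁻¹) * φ g = δ * x * (φ δ)⁻¹ := by
        rw [mul_assoc, inv_mul_eq_iff_eq_mul, ← eq_mul_inv_iff_mul_eq]

theorem inf_twistedCentralizer_congr {H : Subgroup G} {φ ψ : G →* G}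
    (h : Set.EqOn φ ψ H) (x : G) :
    H ⊓ twistedCentralizer φ x = H ⊓ twistedCentralizer ψ x := by
  ext g
  simp only [Subgroup.mem_inf, mem_twistedCentralizer]
  exact and_congr_right fun hg => by rw [h hg]

theorem fst_domRestrict_doubleCosetStabilizer_injective (H K : Subgroup G) (δ : G) :
    Function.Injective ((MonoidHom.fst G G).domRestrict (doubleCosetStabilizer H K δ)) := by
  rintro ⟨⟨a, b⟩, -, hb⟩ ⟨⟨a', b'⟩, -, hb'⟩ (rfl : a = a')
  obtain rfl : b = b' := (MulAut.conj δ).injective (hb.symm.trans hb')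
  rfl

theorem map_fst_doubleCosetStabilizer (H K : Subgroup G) (δ : G) :
    (doubleCosetStabilizer H K δ).map (MonoidHom.fst G G) = H ⊓ MulAut.conj δ • K := by
  ext a
  constructor
  · rintro ⟨⟨a, b⟩, ⟨⟨ha, hb⟩, hab⟩, rfl⟩
    exact ⟨ha, b, hb, hab.symm⟩
  · rintro ⟨ha, b, hb, hab⟩
    exact ⟨(a, b), ⟨⟨ha, hb⟩, hab.symm⟩, rfl⟩

/-- The first projection, as an isomorphism from the stabilizer of `δ` in `H × K` onto
`H ∩ δ K δ⁻¹`. -/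
noncomputable def doubleCosetStabilizerEquiv (H K : Subgroup G) (δ : G) :
    doubleCosetStabilizer H K δ ≃* (H ⊓ MulAut.conj δ • K : Subgroup G) :=
  (MonoidHom.ofInjective (fst_domRestrict_doubleCosetStabilizer_injective H K δ)).trans
    (MulEquiv.subgroupCongr
      ((MonoidHom.domRestrict_range _ _).trans (map_fst_doubleCosetStabilizer H K δ)))

theorem coe_doubleCosetStabilizerEquiv_apply {H K : Subgroup G} {δ : G}
    (p : doubleCosetStabilizer H K δ) :
    (doubleCosetStabilizerEquiv H K δ p : G) = (p : G × G).1 :=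
  rfl

theorem inf_conj_smul_fixed_eq_inf_twistedCentralizer {H : Subgroup G} {θ τ : G →* G}
    (h : Set.EqOn θ τ H) (δ : G) :
    H ⊓ MulAut.conj δ • twistedCentralizer θ 1 = H ⊓ twistedCentralizer τ (δ * (θ δ)⁻¹) := by
  rw [conj_smul_twistedCentralizer, mul_one, inf_twistedCentralizer_congr h]

theorem stmt1_general (σ τ : G →* G) (hτ : ∀ g, σ g = g → σ (τ g) = τ g) (δ : G) :
    ∃ (S : Subgroup (G × G)) (C : Subgroup G),
      (∀ p : G × G, p ∈ S ↔ σ p.1 = p.1 ∧ σ (τ p.2) = p.2 ∧ p.1⁻¹ * δ * p.2 = δ) ∧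
      (∀ g : G, g ∈ C ↔ σ g = g ∧
        g⁻¹ * (δ * (σ (τ δ))⁻¹) * τ g = δ * (σ (τ δ))⁻¹) ∧
      ∃ e : S ≃* C, ∀ p : S, (e p : G) = (p : G × G).1 := by
  let H := twistedCentralizer σ 1
  let K := twistedCentralizer (σ.comp τ) 1
  have hH : Set.EqOn (σ.comp τ) τ H := fun g hg => hτ g (mem_twistedCentralizer_one.mp hg)
  refine ⟨doubleCosetStabilizer H K δ, H ⊓ MulAut.conj δ • K, fun p => ?_, fun g => ?_,
    doubleCosetStabilizerEquiv H K δ, coe_doubleCosetStabilizerEquiv_apply⟩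
  · rw [mem_doubleCosetStabilizer, mem_twistedCentralizer_one, mem_twistedCentralizer_one,
      MonoidHom.comp_apply]
  · rw [inf_conj_smul_fixed_eq_inf_twistedCentralizer hH, Subgroup.mem_inf,
      mem_twistedCentralizer_one, mem_twistedCentralizer, MonoidHom.comp_apply]

end

/-- twisted version. `θ := σ ∘ τ`.  The set
`G_δ = {(g₁,g₂) ∈ G^σ × G^θ : g₁⁻¹ δ g₂ = δ}` is a subgroup of `G × G`, and the
first projection is a group isomorphism onto the τ-twisted centralizer
`{g ∈ G^σ : g⁻¹ (δ θ(δ)⁻¹) τ(g) = δ θ(δ)⁻¹}`. -/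
theorem stmt1 {G : Type*} [Group G] (σ τ : G ≃* G)
    (hσ : ∀ g, σ (σ g) = g) (hτ : ∀ g, τ (τ g) = g)
    (hcomm : ∀ g, σ (τ g) = τ (σ g)) (δ : G) :
    ∃ (S : Subgroup (G × G)) (C : Subgroup G),
      (∀ p : G × G, p ∈ S ↔ σ p.1 = p.1 ∧ σ (τ p.2) = p.2 ∧ p.1⁻¹ * δ * p.2 = δ) ∧
      (∀ g : G, g ∈ C ↔ σ g = g ∧
        g⁻¹ * (δ * (σ (τ δ))⁻¹) * τ g = δ * (σ (τ δ))⁻¹) ∧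
      ∃ e : S ≃* C, ∀ p : S, (e p : G) = (p : G × G).1 := by
  exact stmt1_general (σ : G →* G) (τ : G →* G)
    (fun g hg => (hcomm g).trans (congrArg τ hg)) δ
end

section
/- Let H be a group and σ an automorphism of H with σ ∘ σ = id. For all γ, γ' ∈ H, the following are equivalent: (i) there exist g₁, g₂ ∈ H^σ with γ' = g₁ · γ · g₂⁻¹ (i.e. γ and γ' lie in the same (H^σ, H^σ)-double coset); (ii) there exists x ∈ H^σ with γ' · σ(γ')⁻¹ = x · (γ · σ(γ)⁻¹) · x⁻¹. In other words, the map γ ↦ γ · σ(γ)⁻¹ induces a well-defined injection from the double coset space H^σ \ H / H^σ into the set of H^σ-conjugacy orbits in H. -/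
/-! The fibres of `γ ↦ γ σ(γ)⁻¹` are the left cosets of `H^σ`, and left multiplication by an element
of `H^σ` becomes conjugation under this map. So right multiplication by `H^σ` is invisible, while
an `x ∈ H^σ` conjugating `γ σ(γ)⁻¹` to `γ' σ(γ')⁻¹` puts `x γ` and `γ'` in the same left coset.
The argument works for two homomorphisms `f`, `g` in place of `σ`, `id`, with `f.eqLocus g` in
place of `H^σ`. -/

section EqLocus

variable {H G : Type*} [Group H] [Group G] (f g : H →* G)

theorem map_mul_inv_map_eq_iff_inv_mul_mem_eqLocus (a b : H) :
    g a * (f a)⁻¹ = g b * (f b)⁻¹ ↔ b⁻¹ * a ∈ f.eqLocus g := by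
  calc g a * (f a)⁻¹ = g b * (f b)⁻¹
    _ ↔ (g b)⁻¹ * g a = (f b)⁻¹ * f a := by
      rw [mul_inv_eq_iff_eq_mul, mul_assoc, inv_mul_eq_iff_eq_mul]
    _ ↔ f (b⁻¹ * a) = g (b⁻¹ * a) := by
      rw [eq_comm, map_mul, map_mul, map_inv, map_inv]

theorem map_mul_inv_map_mul_left_of_mem_eqLocus {x : H} (hx : x ∈ f.eqLocus g) (a : H) :
    g (x * a) * (f (x * a))⁻¹ = g x * (g a * (f a)⁻¹) * (g x)⁻¹ := by
  have hfg : f x = g x := hx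
  simp only [map_mul, mul_inv_rev, hfg, mul_assoc]

theorem stmt2_general (γ γ' : H) :
    (∃ g₁ g₂ : H, f g₁ = g g₁ ∧ f g₂ = g g₂ ∧ γ' = g₁ * γ * g₂⁻¹) ↔
      ∃ x : H, f x = g x ∧ g γ' * (f γ')⁻¹ = g x * (g γ * (f γ)⁻¹) * (g x)⁻¹ := by
  constructor
  · rintro ⟨g₁, g₂, h₁, h₂, rfl⟩
    refine ⟨g₁, h₁, ?_⟩
    rw [← map_mul_inv_map_mul_left_of_mem_eqLocus f g h₁,
      map_mul_inv_map_eq_iff_inv_mul_mem_eqLocus, inv_mul_cancel_left]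
    exact (f.eqLocus g).inv_mem h₂
  · rintro ⟨x, hx, hconj⟩
    rw [← map_mul_inv_map_mul_left_of_mem_eqLocus f g hx, eq_comm,
      map_mul_inv_map_eq_iff_inv_mul_mem_eqLocus] at hconj
    exact ⟨x, γ'⁻¹ * (x * γ), hx, hconj, by group⟩

end EqLocus

/-- γ, γ' lie in the same (H^σ, H^σ)-double coset iff
`γ' σ(γ')⁻¹` and `γ σ(γ)⁻¹` are conjugate by an element of `H^σ`. -/
theorem stmt2 {H : Type*} [Group H] (σ : H ≃* H) (hσ : ∀ h, σ (σ h) = h) (γ γ' : H) :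
    (∃ g₁ g₂ : H, σ g₁ = g₁ ∧ σ g₂ = g₂ ∧ γ' = g₁ * γ * g₂⁻¹) ↔
      ∃ x : H, σ x = x ∧ γ' * (σ γ')⁻¹ = x * (γ * (σ γ)⁻¹) * x⁻¹ :=
  stmt2_general σ.toMonoidHom (MonoidHom.id H) γ γ'
end

section
/- Let G be a group with commuting automorphisms σ, τ satisfying σ ∘ σ = id and τ ∘ τ = id, and set θ := σ ∘ τ. For all δ, δ' ∈ G, the following are equivalent: (i) there exist g₁ ∈ G^σ and g₂ ∈ G^θ with δ' = g₁ · δ · g₂⁻¹ (i.e. δ and δ' lie in the same (G^σ, G^θ)-double coset); (ii) there exists x ∈ G^σ with δ' · θ(δ')⁻¹ = x · (δ · θ(δ)⁻¹) · τ(x)⁻¹. In other words, the map δ ↦ δ · θ(δ)⁻¹ induces a well-defined injection from the double coset space G^σ \ G / G^θ into the set of τ-twisted G^σ-conjugacy orbits in G. -/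
/-!
Writing `c g = g * (θ g)⁻¹`, two elements have the same image under `c` exactly when they lie in
the same left coset of `G^θ`, and `c` turns left multiplication by `x` into the `θ`-twisted
conjugation `y ↦ x * y * (θ x)⁻¹`. Hence `δ' ∈ x δ G^θ` if and only if `c δ'` is the twisted
conjugate of `c δ` by `x`. Finally `θ = σ ∘ τ` agrees with `τ` on `G^σ`, because `τ` preserves
`G^σ`.
-/

theorem mem_doubleCoset_iff_exists_eq_mul_inv {G : Type*} [Group G] (s : Set G) (K : Subgroup G)
    {a b : G} :
    b ∈ DoubleCoset.doubleCoset a s K ↔ ∃ x ∈ s, ∃ y ∈ K, b = x * a * y⁻¹ := by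
  rw [DoubleCoset.mem_doubleCoset]
  refine exists_congr fun x ↦ and_congr_right fun _ ↦ (Equiv.inv G).exists_congr fun y ↦ ?_
  simp only [SetLike.mem_coe, Equiv.inv_apply, inv_mem_iff, inv_inv]

section CommutatorMap

open MonoidHom DoubleCoset

variable {G : Type*} [Group G] (θ : G →* G)

theorem commutatorMap_mul (a b : G) :
    commutatorMap θ (a * b) = a * commutatorMap θ b * (θ a)⁻¹ := by
  simp only [commutatorMap_apply, map_mul, div_eq_mul_inv, mul_inv_rev, mul_assoc]

theorem commutatorMap_eq_commutatorMap_iff {a b : G} :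
    commutatorMap θ a = commutatorMap θ b ↔ a⁻¹ * b ∈ θ.eqLocus (.id G) :=
  calc a / θ a = b / θ b
    _ ↔ a⁻¹ * b = (θ a)⁻¹ * θ b := by
      rw [inv_mul_eq_iff_eq_mul, ← mul_assoc, ← div_eq_mul_inv a, ← div_eq_iff_eq_mul, eq_comm]
    _ ↔ θ (a⁻¹ * b) = a⁻¹ * b := by rw [map_mul, map_inv, eq_comm]

theorem mem_doubleCoset_eqLocus_id_iff (s : Set G) {a b : G} :
    b ∈ doubleCoset a s (θ.eqLocus (.id G)) ↔
      ∃ x ∈ s, commutatorMap θ b = x * commutatorMap θ a * (θ x)⁻¹ :=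
  calc b ∈ doubleCoset a s (θ.eqLocus (.id G))
    _ ↔ ∃ x ∈ s, (x * a)⁻¹ * b ∈ θ.eqLocus (.id G) := by
      simp only [mem_doubleCoset, ← inv_mul_eq_iff_eq_mul, SetLike.mem_coe, exists_eq_right']
    _ ↔ ∃ x ∈ s, commutatorMap θ b = x * commutatorMap θ a * (θ x)⁻¹ := by
      simp only [← commutatorMap_eq_commutatorMap_iff, commutatorMap_mul, eq_comm]

end CommutatorMap

theorem stmt3_general {G : Type*} [Group G] (σ τ : G →* G)
    (hcomm : ∀ g, σ (τ g) = τ (σ g)) (δ δ' : G) :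
    (∃ g₁ g₂ : G, σ g₁ = g₁ ∧ σ (τ g₂) = g₂ ∧ δ' = g₁ * δ * g₂⁻¹) ↔
      ∃ x : G, σ x = x ∧ δ' * (σ (τ δ'))⁻¹ = x * (δ * (σ (τ δ))⁻¹) * (τ x)⁻¹ := by
  let θ := σ.comp τ
  let Gσ := σ.eqLocus (.id G)
  let Gθ := θ.eqLocus (.id G)
  have θ_eq_τ {x : G} (hx : σ x = x) : θ x = τ x := (hcomm x).trans (congrArg τ hx)
  calc (∃ g₁ g₂, σ g₁ = g₁ ∧ θ g₂ = g₂ ∧ δ' = g₁ * δ * g₂⁻¹)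
    _ ↔ δ' ∈ DoubleCoset.doubleCoset δ Gσ Gθ := by
      rw [mem_doubleCoset_iff_exists_eq_mul_inv]
      simp only [exists_and_left]
      rfl
    _ ↔ ∃ x ∈ Gσ, δ' / θ δ' = x * (δ / θ δ) * (θ x)⁻¹ :=
      mem_doubleCoset_eqLocus_id_iff θ Gσ
    _ ↔ ∃ x, σ x = x ∧ δ' * (θ δ')⁻¹ = x * (δ * (θ δ)⁻¹) * (τ x)⁻¹ := by
      simp only [← div_eq_mul_inv]
      exact exists_congr fun x ↦ and_congr_right fun hx ↦ by rw [θ_eq_τ hx]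

/-- δ, δ' lie in the same (G^σ, G^θ)-double coset (θ := σ ∘ τ) iff
`δ' θ(δ')⁻¹` and `δ θ(δ)⁻¹` are τ-twisted conjugate by an element of `G^σ`. -/
theorem stmt3 {G : Type*} [Group G] (σ τ : G ≃* G)
    (hσ : ∀ g, σ (σ g) = g) (hτ : ∀ g, τ (τ g) = g)
    (hcomm : ∀ g, σ (τ g) = τ (σ g)) (δ δ' : G) :
    (∃ g₁ g₂ : G, σ g₁ = g₁ ∧ σ (τ g₂) = g₂ ∧ δ' = g₁ * δ * g₂⁻¹) ↔
      ∃ x : G, σ x = x ∧ δ' * (σ (τ δ'))⁻¹ = x * (δ * (σ (τ δ))⁻¹) * (τ x)⁻¹ :=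
  stmt3_general σ.toMonoidHom τ.toMonoidHom hcomm δ δ'
end

section
/- Let H be a group and σ an automorphism of H with σ ∘ σ = id. Suppose x, x' ∈ H satisfy x' · σ(x')⁻¹ = x · σ(x)⁻¹ and x' · σ(x') = σ(x') · x' (i.e. x' commutes with σ(x')). Then the element g := x⁻¹ · x' is fixed by σ, and x · σ(x)⁻¹ = g⁻¹ · (σ(x)⁻¹ · x) · g; in particular x · σ(x)⁻¹ and σ(x)⁻¹ · x are conjugate by an element of H^σ. -/
/-! The value `x * (σ x)⁻¹` determines the left coset of `x` modulo the fixed points of `σ`, so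
`g = x⁻¹ * x'` is fixed. As `x'` commutes with `σ x'`, it commutes with
`t = x' * (σ x')⁻¹ = x * (σ x)⁻¹`. Since `(σ x)⁻¹ * x = x⁻¹ * t * x`, conjugating it by `g`
gives `x'⁻¹ * t * x' = t`. -/

theorem map_inv_mul_eq_map_inv_mul_iff {F F' G K : Type*} [Group G] [Group K]
    [FunLike F G K] [MonoidHomClass F G K] [FunLike F' G K] [MonoidHomClass F' G K]
    (φ : F) (ψ : F') (x y : G) :
    φ (x⁻¹ * y) = ψ (x⁻¹ * y) ↔ φ y * (ψ y)⁻¹ = φ x * (ψ x)⁻¹ := by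
  rw [map_mul, map_inv, map_mul, map_inv, inv_mul_eq_iff_eq_mul, mul_inv_eq_iff_eq_mul, mul_assoc]

theorem inv_mul_conj_eq_mul_inv_iff_commute {G : Type*} [Group G] (a b c : G) :
    (a⁻¹ * c)⁻¹ * (b⁻¹ * a) * (a⁻¹ * c) = a * b⁻¹ ↔ Commute c (a * b⁻¹) := by
  have conj_eq : (a⁻¹ * c)⁻¹ * (b⁻¹ * a) * (a⁻¹ * c) = c⁻¹ * (a * b⁻¹ * c) := by group
  rw [conj_eq, inv_mul_eq_iff_eq_mul, commute_iff_eq, eq_comm]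

theorem stmt10_general {H F : Type*} [Group H] [FunLike F H H] [MonoidHomClass F H H] (σ : F)
    (x x' : H) (h1 : x' * (σ x')⁻¹ = x * (σ x)⁻¹) (h2 : Commute x' (σ x')) :
    σ (x⁻¹ * x') = x⁻¹ * x' ∧
      x * (σ x)⁻¹ = (x⁻¹ * x')⁻¹ * ((σ x)⁻¹ * x) * (x⁻¹ * x') := by
  have commute_t : Commute x' (x * (σ x)⁻¹) := h1 ▸ (Commute.refl x').mul_right h2.inv_right
  exact ⟨((map_inv_mul_eq_map_inv_mul_iff (MonoidHom.id H) σ x x').mpr h1).symm,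
    ((inv_mul_conj_eq_mul_inv_iff_commute x (σ x) x').mpr commute_t).symm⟩

/-- if `x' σ(x')⁻¹ = x σ(x)⁻¹` and `x'` commutes with `σ(x')`, then
`g := x⁻¹ x'` is σ-fixed and `x σ(x)⁻¹ = g⁻¹ (σ(x)⁻¹ x) g`. -/
theorem stmt10 {H : Type*} [Group H] (σ : H ≃* H) (hσ : ∀ h, σ (σ h) = h)
    (x x' : H) (h1 : x' * (σ x')⁻¹ = x * (σ x)⁻¹) (h2 : x' * σ x' = σ x' * x') :
    σ (x⁻¹ * x') = x⁻¹ * x' ∧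
      x * (σ x)⁻¹ = (x⁻¹ * x')⁻¹ * ((σ x)⁻¹ * x) * (x⁻¹ * x') :=
  stmt10_general σ x x' h1 h2
end
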